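/- arXiv:2601.13363 — 2 statements merged into one kernel-verified Lean document; each statement's English description precedes it below -/
import Mathlib

section
/- Let (X,d) be a UT-space and let T = T(l) be a labeled tree with non-degenerate labeling such that (X,d) and (V(T), d_l) are isometric. Then for every open ball B of (X,d) there is a subtree T¹ of T such that (B, d|_{B×B}) is isometric to (V(T¹), d_{l¹}), where l¹ is the restriction of l to V(T¹). -/
open scoped Classical

universe u

/-- The ultrametric `d_l` generated by a labeling `l` on the vertex set of a tree `G`:
for `u ≠ v` it is the maximum of `l` over the vertices of the unique path joining
`u` and `v`, and `d_l(u,u) = 0`. -/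
noncomputable def dl {V : Type*} {G : SimpleGraph V} (hG : G.IsTree) (l : V → ℝ)
    (u v : V) : ℝ :=
  if u = v then 0
  else (((hG.existsUnique_path u v).exists.choose.support).map l).foldr max (l u)

/-!
If `v` lies in the `d_l`-ball around `u`, then so does every vertex of the path from `u` to `v`,
because the maximum of `l` over an initial segment is no larger. Hence a ball induces a connected
subgraph of the tree, that is, a subtree. A path of a subtree is a path of the whole tree, so by
uniqueness of paths the ultrametric of the restricted labeling is the restriction of `d_l`.
-/

lemma foldr_max_lt_iff {α : Type*} [LinearOrder α] {a b : α} {L : List α} :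
    L.foldr max a < b ↔ a < b ∧ ∀ x ∈ L, x < b := by
  induction L with
  | nil => simp
  | cons x L ih => simp only [List.foldr_cons, max_lt_iff, ih, List.forall_mem_cons, and_left_comm]

section LabeledTree

variable {V : Type*} {G : SimpleGraph V} (hG : G.IsTree) (l : V → ℝ)

lemma dl_self (u : V) : dl hG l u u = 0 := if_pos rfl

variable {l} {u v w : V} {r : ℝ}

lemma dl_eq_foldr_max_of_isPath (huv : u ≠ v) {p : G.Walk u v} (hp : p.IsPath) :
    dl hG l u v = (p.support.map l).foldr max (l u) := by
  have hpath := hG.existsUnique_path u v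
  rw [dl, if_neg huv, hpath.unique hpath.exists.choose_spec hp]

lemma dl_lt_iff_of_isPath (huv : u ≠ v) {p : G.Walk u v} (hp : p.IsPath) :
    dl hG l u v < r ↔ ∀ w ∈ p.support, l w < r := by
  rw [dl_eq_foldr_max_of_isPath hG huv hp, foldr_max_lt_iff, List.forall_mem_map]
  exact and_iff_right_of_imp fun h => h u p.start_mem_support

lemma dl_lt_of_mem_support (hr : 0 < r) {p : G.Walk u v} (hp : p.IsPath)
    (hw : w ∈ p.support) (huv : dl hG l u v < r) : dl hG l u w < r := by
  obtain rfl | huw := eq_or_ne u w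
  · rwa [dl_self]
  obtain rfl | hne := eq_or_ne u v
  · rw [SimpleGraph.Walk.nil_iff_support_eq.1 (SimpleGraph.Walk.isPath_iff_nil.1 hp),
      List.mem_singleton] at hw
    exact absurd hw.symm huw
  rw [dl_lt_iff_of_isPath hG hne hp] at huv
  rw [dl_lt_iff_of_isPath hG huw (hp.takeUntil hw)]
  exact fun x hx => huv x (p.support_takeUntil_subset_support hw hx)

variable (l)

lemma dl_map_of_injective {V' : Type*} {G' : SimpleGraph V'} (hG' : G'.IsTree) {f : G' →g G}
    (hf : Function.Injective f) (a b : V') :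
    dl hG l (f a) (f b) = dl hG' (l ∘ f) a b := by
  obtain rfl | hab := eq_or_ne a b
  · rw [dl_self, dl_self]
  obtain ⟨p, hp⟩ := (hG'.existsUnique_path a b).exists
  rw [dl_eq_foldr_max_of_isPath hG' hab hp,
    dl_eq_foldr_max_of_isPath hG (hf.ne hab) (hp.map hf), SimpleGraph.Walk.support_map,
    List.map_map, Function.comp_apply]

/-- The subgraph of a labeled tree induced on the open ball of radius `r` around the vertex `u`
for `d_l`. It is the subtree associated with that ball when `0 < r`. -/
noncomputable def ballSubgraph (u : V) (r : ℝ) : G.Subgraph :=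
  (⊤ : G.Subgraph).induce {v | dl hG l u v < r}

lemma mem_verts_ballSubgraph : v ∈ (ballSubgraph hG l u r).verts ↔ dl hG l u v < r := Iff.rfl

lemma ballSubgraph_connected (u : V) (hr : 0 < r) : (ballSubgraph hG l u r).Connected := by
  refine SimpleGraph.connected_induce_iff.1 (G.induce_connected_of_patches u ?_ fun {v} hv => ?_)
  · rwa [Set.mem_ofPred_eq, dl_self]
  · obtain ⟨p, hp⟩ := (hG.existsUnique_path u v).exists
    exact ⟨{w | w ∈ p.support}, fun w hw => dl_lt_of_mem_support hG hr hp hw hv,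
      p.start_mem_support, p.end_mem_support, p.connected_induce_support _ _⟩

lemma ballSubgraph_isTree (u : V) (hr : 0 < r) : (ballSubgraph hG l u r).coe.IsTree :=
  ⟨(ballSubgraph_connected hG l u hr).coe, hG.isAcyclic.subgraph _⟩

end LabeledTree

theorem ball_isometric_to_labeled_subtree_general
    {X V : Type*} [PseudoMetricSpace X] {G : SimpleGraph V} (hG : G.IsTree) (l : V → ℝ)
    (Φ : X → V) (hΦ : Function.Bijective Φ)
    (hiso : ∀ x y : X, dist x y = dl hG l (Φ x) (Φ y)) (c : X) (r : ℝ) (hr : 0 < r) :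
    ∃ (H : G.Subgraph) (hH : H.coe.IsTree),
      ∃ Ψ : Metric.ball c r → H.verts, Function.Bijective Ψ ∧
        ∀ x y : Metric.ball c r,
          dist x y = dl hH (fun w : H.verts => l w.1) (Ψ x) (Ψ y) := by
  let H := ballSubgraph hG l (Φ c) r
  have hH : H.coe.IsTree := ballSubgraph_isTree hG l (Φ c) hr
  have hball (x : X) : x ∈ Metric.ball c r ↔ Φ x ∈ H.verts := by
    rw [Metric.mem_ball', hiso, mem_verts_ballSubgraph]
  let Ψ : Metric.ball c r ≃ H.verts := (Equiv.ofBijective Φ hΦ).subtypeEquiv hball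
  refine ⟨H, hH, Ψ, Ψ.bijective, fun x y => ?_⟩
  calc
    dist x y = dl hG l (Φ x) (Φ y) := hiso x y
    _ = dl hH (fun w => l w.1) (Ψ x) (Ψ y) :=
      dl_map_of_injective hG l hH H.hom_injective (Ψ x) (Ψ y)

/-- Let `(X,d)` be a UT-space and `T = T(l)` a labeled tree with a
non-degenerate labeling such that `(X,d)` and `(V(T), d_l)` are isometric.  Then for
every open ball `B` of `(X,d)` there is a subtree `T¹` of `T` (a subgraph which is a
tree) such that `(B, d|_{B×B})` is isometric to `(V(T¹), d_{l¹})`, where `l¹` is the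
restriction of `l` to `V(T¹)`. -/
theorem ball_isometric_to_labeled_subtree
    {X : Type u} [MetricSpace X] {V : Type u} {G : SimpleGraph V} (hG : G.IsTree)
    (l : V → ℝ) (hl0 : ∀ v, 0 ≤ l v)
    (hl : ∀ u v : V, G.Adj u v → 0 < max (l u) (l v))
    (Φ : X → V) (hΦ : Function.Bijective Φ)
    (hiso : ∀ x y : X, dist x y = dl hG l (Φ x) (Φ y))
    (c : X) (r : ℝ) (hr : 0 < r) :
    ∃ (H : G.Subgraph) (hH : H.coe.IsTree),
      ∃ Ψ : Metric.ball c r → H.verts, Function.Bijective Ψ ∧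
        ∀ x y : Metric.ball c r,
          dist x y = dl hH (fun w : H.verts => l w.1) (Ψ x) (Ψ y) :=
  ball_isometric_to_labeled_subtree_general hG l Φ hΦ hiso c r hr
end

section
/- Let (X,d) be a UT-space with at least two points and let C(X) be its center of distances. Then C(X) = {0} holds if and only if (X,d) is weakly similar to an unbounded ultrametric space. -/
open scoped Classical ENNReal

universe u

/-- `(X,d)` is a **UT-space**: it is isometric to `(V(T), d_l)` for some labeled tree
`(T,l)` with a non-degenerate labeling `l : V(T) → [0,∞)`. -/
def IsUTSpace (X : Type u) [MetricSpace X] : Prop :=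
  ∃ (V : Type u) (G : SimpleGraph V) (hG : G.IsTree) (l : V → ℝ),
    (∀ v, 0 ≤ l v) ∧
    (∀ u v : V, G.Adj u v → 0 < max (l u) (l v)) ∧
    ∃ Φ : X → V, Function.Bijective Φ ∧ ∀ x y : X, dist x y = dl hG l (Φ x) (Φ y)

/-- The distance set `D(X) = {d(x,y) : x,y ∈ X}`, with distances recorded as
extended non-negative reals. -/
def distSet (X : Type*) [MetricSpace X] : Set ℝ≥0∞ :=
  {t | ∃ x y : X, edist x y = t}

/-- The center of distances `C(X) = {t ∈ D(X) : ∀ p ∈ X, ∃ x ∈ X, d(p,x) = t}`. -/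
def centerOfDistances (X : Type*) [MetricSpace X] : Set ℝ≥0∞ :=
  {t | t ∈ distSet X ∧ ∀ p : X, ∃ x : X, edist p x = t}

/-- The distance set `D(X) = {d(x,y) : x,y ∈ X}` as a set of real numbers. -/
def realDistSet (X : Type*) [MetricSpace X] : Set ℝ :=
  {t | ∃ x y : X, dist x y = t}

/-- `(X,d)` and `(Y,ρ)` are **weakly similar**: there is a bijection `Φ : X → Y` and a
strictly increasing bijection `f : D(Y) → D(X)` between the distance sets such that
`d(x,y) = f(ρ(Φ x, Φ y))` for all `x, y ∈ X`. -/
def WeaklySimilar (X : Type*) (Y : Type*) [MetricSpace X] [MetricSpace Y] : Prop :=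
  ∃ Φ : X → Y, Function.Bijective Φ ∧
    ∃ f : realDistSet Y → realDistSet X, StrictMono f ∧ Function.Bijective f ∧
      ∀ x y : X, dist x y = (f ⟨dist (Φ x) (Φ y), ⟨Φ x, Φ y, rfl⟩⟩ : ℝ)

/-- `(Y,ρ)` is an unbounded ultrametric space. -/
def IsUnboundedUltrametric (Y : Type*) [MetricSpace Y] : Prop :=
  IsUltrametricDist Y ∧ EMetric.diam (Set.univ : Set Y) = ⊤

/-!
Both conditions say that the set of distances of `X` has no greatest element.

In an ultrametric space a greatest distance `d(a,b)` is realized from every point `p`, because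
`d(a,b) ≤ max (d(a,p)) (d(p,b))`; it is a nonzero element of the center as soon as there are two
points. Conversely, in a UT-space the label of a vertex is at most its distance to any other vertex,
so a nonzero `t` in the center bounds all labels, hence all distances, and is the greatest one.

The distances of an unbounded space have no greatest element, and weak similarity preserves this.
If conversely the distances of `X` are bounded with an unattained supremum `s`, the increasing
function `t ↦ (s - t)⁻¹ - s⁻¹` turns the ultrametric into an unbounded one.
-/

theorem foldr_max_le_iff {α : Type*} [LinearOrder α] {L : List α} {a c : α} :
    L.foldr max a ≤ c ↔ a ≤ c ∧ ∀ x ∈ L, x ≤ c := by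
  induction L with
  | nil => simp
  | cons b L ih => simp [ih, and_left_comm]

section LabeledTree

variable {V : Type*} {G : SimpleGraph V} (hG : G.IsTree) (l : V → ℝ) {u v : V} {c : ℝ}

-- A walk may replace the path: bypassing its loops shrinks its support.
theorem dl_le_iff (huv : u ≠ v) :
    dl hG l u v ≤ c ↔ ∃ p : G.Walk u v, ∀ w ∈ p.support, l w ≤ c := by
  have hpath := (hG.existsUnique_path u v).exists.choose_spec
  rw [dl, if_neg huv, foldr_max_le_iff, List.forall_mem_map]
  refine ⟨fun h ↦ ⟨_, h.2⟩, fun ⟨p, hp⟩ ↦ ⟨hp u p.start_mem_support, fun w hw ↦ ?_⟩⟩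
  rw [(hG.existsUnique_path u v).unique hpath p.bypass_isPath] at hw
  exact hp w (p.support_bypass_subset_support hw)

theorem label_le_dl (huv : u ≠ v) : l u ≤ dl hG l u v :=
  let ⟨p, hp⟩ := (dl_le_iff hG l huv).1 le_rfl
  hp u p.start_mem_support

variable {l}

theorem dl_nonneg (hl : ∀ v, 0 ≤ l v) (u v : V) : 0 ≤ dl hG l u v := by
  by_cases huv : u = v
  · rw [dl, if_pos huv]
  · exact (hl u).trans (label_le_dl hG l huv)

theorem dl_le_max (hl : ∀ v, 0 ≤ l v) (u v w : V) :
    dl hG l u w ≤ max (dl hG l u v) (dl hG l v w) := by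
  by_cases huw : u = w
  · rw [dl, if_pos huw]
    exact le_max_of_le_left (dl_nonneg hG hl u v)
  by_cases huv : u = v
  · exact huv ▸ le_max_right _ _
  by_cases hvw : v = w
  · exact hvw ▸ le_max_left _ _
  obtain ⟨p, hp⟩ := (dl_le_iff hG l huv).1 le_rfl
  obtain ⟨q, hq⟩ := (dl_le_iff hG l hvw).1 le_rfl
  refine (dl_le_iff hG l huw).2 ⟨p.append q, fun x hx ↦ ?_⟩
  rcases (SimpleGraph.Walk.mem_support_append_iff p q).1 hx with hx | hx
  · exact le_max_of_le_left (hp x hx)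
  · exact le_max_of_le_right (hq x hx)

end LabeledTree

namespace IsUTSpace

variable {X : Type u} [MetricSpace X]

theorem isUltrametricDist (hX : IsUTSpace X) : IsUltrametricDist X := by
  obtain ⟨V, G, hG, l, hl, -, Φ, -, hd⟩ := hX
  exact ⟨fun x y z ↦ by simpa only [hd] using dl_le_max hG hl (Φ x) (Φ y) (Φ z)⟩

theorem dist_le_of_forall_exists_ne_dist_le (hX : IsUTSpace X) {t : ℝ}
    (ht : ∀ p : X, ∃ x ≠ p, dist p x ≤ t) (a b : X) : dist a b ≤ t := by
  obtain ⟨V, G, hG, l, -, -, Φ, hΦ, hd⟩ := hX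
  have label_le (v : V) : l v ≤ t := by
    obtain ⟨p, rfl⟩ := hΦ.2 v
    obtain ⟨x, hxp, hpx⟩ := ht p
    exact (label_le_dl hG l (hΦ.1.ne hxp.symm)).trans (hd p x ▸ hpx)
  by_cases hab : a = b
  · obtain ⟨x, -, hax⟩ := ht a
    simpa [hab] using dist_nonneg.trans hax
  · obtain ⟨p⟩ := hG.connected.preconnected (Φ a) (Φ b)
    exact hd a b ▸ (dl_le_iff hG l (hΦ.1.ne hab)).2 ⟨p, fun w _ ↦ label_le w⟩

end IsUTSpace

section DistSet

variable {X : Type*} [MetricSpace X]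

theorem dist_mem_realDistSet (x y : X) : dist x y ∈ realDistSet X := ⟨x, y, rfl⟩

theorem zero_mem_realDistSet (x : X) : 0 ∈ realDistSet X := ⟨x, x, dist_self x⟩

instance [Nonempty X] : Nonempty (realDistSet X) :=
  Nonempty.map (fun x ↦ ⟨0, zero_mem_realDistSet x⟩) ‹_›

theorem ediam_univ_eq_top_iff_not_bddAbove :
    Metric.ediam (Set.univ : Set X) = ⊤ ↔ ¬BddAbove (realDistSet X) := by
  rw [← not_iff_not, not_not, ← ne_eq, ← Metric.isBounded_iff_ediam_ne_top, Metric.isBounded_iff]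
  simp only [bddAbove_def, realDistSet, Set.mem_univ, true_imp_iff, Set.mem_ofPred_eq,
    forall_exists_index, forall_comm (α := ℝ), forall_eq']

end DistSet

section Center

variable {X : Type*} [MetricSpace X]

theorem edist_mem_centerOfDistances_iff {a b : X} :
    edist a b ∈ centerOfDistances X ↔ ∀ p : X, ∃ x : X, dist p x = dist a b := by
  have edist_eq_iff (p x : X) : edist p x = edist a b ↔ dist p x = dist a b := by
    simp only [edist_nndist, dist_nndist, ENNReal.coe_inj, NNReal.coe_inj]
  simp only [centerOfDistances, Set.mem_ofPred_eq, edist_eq_iff, and_iff_right_iff_imp]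
  exact fun _ ↦ ⟨a, b, rfl⟩

theorem zero_mem_centerOfDistances [Nonempty X] : 0 ∈ centerOfDistances X := by
  inhabit X
  exact ⟨⟨default, default, edist_self _⟩, fun p ↦ ⟨p, edist_self p⟩⟩

theorem edist_mem_centerOfDistances_of_forall_dist_le [IsUltrametricDist X] {a b : X}
    (hab : ∀ x y : X, dist x y ≤ dist a b) : edist a b ∈ centerOfDistances X := by
  refine edist_mem_centerOfDistances_iff.2 fun p ↦ ?_
  rcases le_max_iff.1 (dist_triangle_max a p b) with h | h
  · exact ⟨a, (hab p a).antisymm (dist_comm a p ▸ h)⟩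
  · exact ⟨b, (hab p b).antisymm h⟩

theorem noMaxOrder_realDistSet_of_centerOfDistances_eq_zero [Nontrivial X] [IsUltrametricDist X]
    (hC : centerOfDistances X = {0}) : NoMaxOrder (realDistSet X) := by
  refine ⟨fun ⟨_, a, b, hab⟩ ↦ ?_⟩
  subst hab
  by_contra! hmax
  have dist_le (x y : X) : dist x y ≤ dist a b := hmax ⟨_, dist_mem_realDistSet x y⟩
  have hab : edist a b = 0 := hC.subset (edist_mem_centerOfDistances_of_forall_dist_le dist_le)
  obtain ⟨x, y, hxy⟩ := exists_pair_ne X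
  exact hxy (dist_le_zero.1 (by simpa [edist_eq_zero.1 hab] using dist_le x y))

end Center

namespace IsUTSpace

variable {X : Type u} [MetricSpace X]

theorem centerOfDistances_eq_zero_of_noMaxOrder [Nonempty X] [NoMaxOrder (realDistSet X)]
    (hX : IsUTSpace X) : centerOfDistances X = {0} := by
  refine Set.Subset.antisymm (fun t ht ↦ ?_)
    (Set.singleton_subset_iff.2 zero_mem_centerOfDistances)
  obtain ⟨a, b, rfl⟩ := ht.1
  by_contra hab
  obtain ⟨⟨_, c, d, rfl⟩, hcd⟩ := exists_gt (⟨_, dist_mem_realDistSet a b⟩ : realDistSet X)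
  refine hcd.not_ge (hX.dist_le_of_forall_exists_ne_dist_le (fun p ↦ ?_) c d)
  obtain ⟨x, hx⟩ := edist_mem_centerOfDistances_iff.1 ht p
  refine ⟨x, ?_, hx.le⟩
  rintro rfl
  exact hab (edist_eq_zero.2 (dist_eq_zero.1 (hx ▸ dist_self x)))

theorem centerOfDistances_eq_zero_iff_noMaxOrder [Nontrivial X] (hX : IsUTSpace X) :
    centerOfDistances X = {0} ↔ NoMaxOrder (realDistSet X) :=
  have := hX.isUltrametricDist
  ⟨noMaxOrder_realDistSet_of_centerOfDistances_eq_zero,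
    fun _ ↦ hX.centerOfDistances_eq_zero_of_noMaxOrder⟩

end IsUTSpace

theorem noMaxOrder_of_not_bddAbove {α : Type*} [LinearOrder α] {D : Set α} (hD : ¬BddAbove D) :
    NoMaxOrder D :=
  ⟨fun t ↦ let ⟨s, hs, hts⟩ := not_bddAbove_iff.1 hD t
    ⟨⟨s, hs⟩, hts⟩⟩

namespace WeaklySimilar

variable {X Y : Type*} [MetricSpace X] [MetricSpace Y]

theorem of_strictMonoOn (Φ : X ≃ Y) {g : ℝ → ℝ} (hg : StrictMonoOn g (realDistSet X))
    (hΦ : ∀ x y, dist (Φ x) (Φ y) = g (dist x y)) : WeaklySimilar X Y := by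
  have hD : realDistSet Y = g '' realDistSet X := by
    ext t
    simp [realDistSet, ← hΦ, Φ.surjective.exists]
  let e : realDistSet Y ≃o realDistSet X :=
    (OrderIso.setCongr _ _ hD).trans (hg.orderIso g (realDistSet X)).symm
  refine ⟨Φ, Φ.bijective, e, e.strictMono, e.bijective, fun x y ↦ ?_⟩
  have he : e.symm ⟨_, dist_mem_realDistSet x y⟩ = ⟨_, dist_mem_realDistSet (Φ x) (Φ y)⟩ :=
    Subtype.ext (hΦ x y).symm
  rw [← he, e.apply_symm_apply]

theorem noMaxOrder_realDistSet (h : WeaklySimilar X Y) [NoMaxOrder (realDistSet Y)] :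
    NoMaxOrder (realDistSet X) := by
  obtain ⟨-, -, f, hf, hf_bij, -⟩ := h
  refine ⟨fun t ↦ ?_⟩
  obtain ⟨s, rfl⟩ := hf_bij.2 t
  obtain ⟨s', hs⟩ := exists_gt s
  exact ⟨f s', hf hs⟩

theorem isUltrametricDist (h : WeaklySimilar X Y) [IsUltrametricDist X] :
    IsUltrametricDist Y := by
  obtain ⟨Φ, hΦ, f, hf, -, hd⟩ := h
  refine ⟨hΦ.2.forall₃.2 fun x y z ↦ le_max_iff.2 ?_⟩
  have hxyz := le_max_iff.1 (dist_triangle_max x y z)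
  rwa [hd, hd, hd, Subtype.coe_le_coe, Subtype.coe_le_coe, hf.le_iff_le, hf.le_iff_le] at hxyz

end WeaklySimilar

section InvSub

variable {K : Type*} [Field K] [LinearOrder K] [IsStrictOrderedRing K] {D : Set K} {s : K}

theorem strictMonoOn_inv_sub : StrictMonoOn (fun t ↦ (s - t)⁻¹) (Set.Iio s) :=
  fun _ _ _ hb hab ↦ inv_strictAnti₀ (sub_pos.2 hb) (sub_lt_sub_left hab s)

theorem not_bddAbove_image_inv_sub_of_isLUB (hs : IsLUB D s) (hsD : s ∉ D) :
    ¬BddAbove ((fun t ↦ (s - t)⁻¹) '' D) := by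
  refine not_bddAbove_iff.2 fun C ↦ ?_
  have hC : 0 < |C| + 1 := by positivity
  obtain ⟨t, htD, htC, hts⟩ := hs.exists_between' hsD (sub_lt_self s (inv_pos.2 hC))
  refine ⟨(s - t)⁻¹, ⟨t, htD, rfl⟩, ?_⟩
  calc C < |C| + 1 := (le_abs_self C).trans_lt (lt_add_one _)
    _ < (s - t)⁻¹ := (lt_inv_comm₀ hC (sub_pos.2 hts)).2 (sub_lt_comm.1 htC)

end InvSub

theorem exists_strictMonoOn_not_bddAbove_image (D : Set ℝ) [Nonempty D] [NoMaxOrder D] :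
    ∃ g : ℝ → ℝ, StrictMonoOn g D ∧ ¬BddAbove (g '' D) := by
  by_cases hD : BddAbove D
  · have hlub : IsLUB D (sSup D) := isLUB_csSup (Set.nonempty_coe_sort.1 ‹_›) hD
    have lt_sSup (t : ℝ) (ht : t ∈ D) : t < sSup D :=
      let ⟨t', htt'⟩ := exists_gt (⟨t, ht⟩ : D)
      lt_of_lt_of_le htt' (hlub.1 t'.2)
    exact ⟨fun t ↦ (sSup D - t)⁻¹, strictMonoOn_inv_sub.mono lt_sSup,
      not_bddAbove_image_inv_sub_of_isLUB hlub fun h ↦ (lt_sSup _ h).false⟩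
  · exact ⟨id, strictMonoOn_id, by rwa [Set.image_id]⟩

section Remetrization

variable {X : Type*} [MetricSpace X] {g : ℝ → ℝ}

theorem comp_dist_sub_triangle [IsUltrametricDist X] (hg : MonotoneOn g (realDistSet X))
    (x y z : X) :
    g (dist x z) - g 0 ≤ (g (dist x y) - g 0) + (g (dist y z) - g 0) := by
  have g_zero_le (x y : X) : g 0 ≤ g (dist x y) :=
    hg (zero_mem_realDistSet x) (dist_mem_realDistSet x y) dist_nonneg
  have g_le {a b c d : X} (h : dist a b ≤ dist c d) : g (dist a b) ≤ g (dist c d) :=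
    hg (dist_mem_realDistSet a b) (dist_mem_realDistSet c d) h
  rcases le_max_iff.1 (dist_triangle_max x y z) with h | h
  · linarith [g_le h, g_zero_le y z]
  · linarith [g_le h, g_zero_le x y]

/-- A copy of an ultrametric space `(X, d)`, to be equipped with the ultrametric `g ∘ d - g 0`.
Monotonicity of `g` is asked only on the distances that occur, so that `g` may have a pole at
their supremum. -/
def Remetrized (_hg : StrictMonoOn g (realDistSet X)) : Type _ := X

namespace Remetrized

/-- The identity map from a space to its remetrized copy. -/
def equiv (hg : StrictMonoOn g (realDistSet X)) : X ≃ Remetrized hg := Equiv.refl X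

variable [IsUltrametricDist X] (hg : StrictMonoOn g (realDistSet X))

noncomputable instance : MetricSpace (Remetrized hg) where
  dist x y := g (dist ((equiv hg).symm x) ((equiv hg).symm y)) - g 0
  dist_self x := by simp
  dist_comm x y := by simp only [dist_comm]
  dist_triangle x y z := comp_dist_sub_triangle hg.monotoneOn _ _ _
  eq_of_dist_eq_zero {x y} h :=
    (equiv hg).symm.injective <| dist_eq_zero.1 <|
      hg.injOn (dist_mem_realDistSet _ _) (zero_mem_realDistSet ((equiv hg).symm x))
        (sub_eq_zero.1 h)

theorem dist_equiv (x y : X) : dist (equiv hg x) (equiv hg y) = g (dist x y) - g 0 := by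
  rfl

theorem weaklySimilar : WeaklySimilar X (Remetrized hg) :=
  .of_strictMonoOn (equiv hg) (g := fun t ↦ g t - g 0)
    (fun _ ha _ hb hab ↦ sub_lt_sub_right (hg ha hb hab) _) (dist_equiv hg)

variable {hg}

theorem not_bddAbove_realDistSet (hunb : ¬BddAbove (g '' realDistSet X)) :
    ¬BddAbove (realDistSet (Remetrized hg)) := by
  rintro ⟨C, hC⟩
  refine hunb ⟨C + g 0, ?_⟩
  rintro _ ⟨_, ⟨x, y, rfl⟩, rfl⟩
  exact sub_le_iff_le_add.1 (hC ⟨equiv hg x, equiv hg y, dist_equiv hg x y⟩)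

theorem isUnboundedUltrametric (hunb : ¬BddAbove (g '' realDistSet X)) :
    IsUnboundedUltrametric (Remetrized hg) :=
  ⟨(weaklySimilar hg).isUltrametricDist,
    ediam_univ_eq_top_iff_not_bddAbove.2 (not_bddAbove_realDistSet hunb)⟩

end Remetrized

end Remetrization

/-- Let `(X,d)` be a UT-space with at least two points and let
`C(X)` be its center of distances.  Then `C(X) = {0}` holds if and only if `(X,d)` is
weakly similar to an unbounded ultrametric space. -/
theorem centerOfDistances_eq_zero_iff_weaklySimilar_unbounded
    {X : Type u} [MetricSpace X] [Nontrivial X] (hX : IsUTSpace X) :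
    centerOfDistances X = {0} ↔
      ∃ (Y : Type u) (mY : MetricSpace Y),
        @IsUnboundedUltrametric Y mY ∧ @WeaklySimilar X Y _ mY := by
  rw [hX.centerOfDistances_eq_zero_iff_noMaxOrder]
  constructor
  · intro _
    have := hX.isUltrametricDist
    obtain ⟨g, hg, hunb⟩ := exists_strictMonoOn_not_bddAbove_image (realDistSet X)
    exact ⟨Remetrized hg, inferInstance, Remetrized.isUnboundedUltrametric hunb,
      Remetrized.weaklySimilar hg⟩
  · rintro ⟨Y, mY, ⟨-, hY⟩, hXY⟩
    have := noMaxOrder_of_not_bddAbove (ediam_univ_eq_top_iff_not_bddAbove.1 hY)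
    exact hXY.noMaxOrder_realDistSet
end
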